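/- Let α < ε₀ be an ordinal and N > 0 a natural number with ω_N →_N α+1. Then for every n ≥ N, ω_{n+1} →_n ω_n + α + 1. -/

import Mathlib

/-!
The proof is the standard calculus of the step-down relation `→_n` below `ε₀`. Every nonzero
ordinal is `ω ^ γ * (x + 1)` for some `γ, x`, and in this form the fundamental sequence can be read
off. Three facts follow:

* adding a multiple of `ω ^ e` on the left of ordinals `≤ ω ^ e` preserves `→_n`
  (`stepDown_mul_add`), because it does not change the last term of the Cantor normal form;
* `a →_n b` implies `ω ^ a →_n ω ^ b` (`stepDown_opow`);
* `a →_m b` implies `a →_n b` for `m ≤ n` (`stepDown_mono`).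

For `n ≥ N > 0` monotonicity gives `ω_N →_n α + 1`, and `ω_n →_n ω_N` by iterating `stepDown_opow`
on `ω →_n 1`; hence `ω_n →_n α + 1`. On the other hand `ω_n →_n ω_{n-1} + 1`, so
`ω_{n+1} →_n ω ^ (ω_{n-1} + 1) →_n ω_n * (n + 1) →_n ω_n + ω_n`, and the second summand can be
stepped down to `α + 1`.
-/


open Ordinal
open scoped Classical

noncomputable section

/-- `omegaTower m α` is `ω_m^α`: the `m`-fold iterated `ω`-power tower on top of `α`. -/
noncomputable def omegaTower : ℕ → Ordinal.{0} → Ordinal.{0}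
  | 0, α => α
  | m + 1, α => omega0 ^ (omegaTower m α)

/-- `ε₀`, the least ordinal `ε` with `ω ^ ε = ε`. -/
noncomputable def eps0 : Ordinal.{0} := Ordinal.nfp (fun a => omega0 ^ a) 0

/-- The fundamental sequence `{α}(n)` for ordinals below `ε₀`:
`{0}(n) = 0`, `{β+1}(n) = β`, and for a limit `α = β + ω^γ·(k+1)` (with `γ > 0` the least
exponent of the Cantor normal form) we set `{α}(n) = β + ω^γ·k + ω^δ·(n+1)` if `γ = δ+1`
and `{α}(n) = β + ω^γ·k + ω^{{γ}(n)}` if `γ` is a limit.  Here `γ` is recovered as the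
largest exponent with `ω^γ ∣ α`, and `β + ω^γ·k = ω^γ · pred (α / ω^γ)`. -/
noncomputable def fundSeq (α : Ordinal.{0}) (n : ℕ) : Ordinal.{0} :=
  if _h0 : α = 0 then 0
  else if hs : ∃ β, α = β + 1 then Classical.choose hs
  else
    let γ : Ordinal := sSup {c : Ordinal | omega0 ^ c ∣ α}
    if hγ : ∃ δ, γ = δ + 1 then
      omega0 ^ γ * Ordinal.pred (α / omega0 ^ γ) +
        omega0 ^ (Classical.choose hγ) * ((n : Ordinal) + 1)
    else if hlt : γ < α then
      omega0 ^ γ * Ordinal.pred (α / omega0 ^ γ) + omega0 ^ (fundSeq γ n)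
    else 0
termination_by α
decreasing_by exact hlt

/-- The step-down relation `β →_n γ`: there is a finite sequence from `β` to `γ`
each step of which descends to the `n`-th member of the fundamental sequence. -/
def stepDown (n : ℕ) (β γ : Ordinal.{0}) : Prop :=
  Relation.ReflTransGen (fun a b => fundSeq a n = b) β γ

/-- The fast-growing hierarchy `F_α` for `α < ε₀`:
`F_0(x) = x+1`, `F_{α+1}(x) = F_α^[x+1](x)`, `F_λ(x) = F_{{λ}(x)}(x)` for limits. -/
noncomputable def fgh (α : Ordinal.{0}) : ℕ → ℕ :=
  if _h0 : α = 0 then fun x => x + 1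
  else if hs : ∃ β, α = β + 1 then fun x => (fgh (Classical.choose hs))^[x + 1] x
  else fun x => if hlt : fundSeq α x < α then fgh (fundSeq α x) x else 0
termination_by α
decreasing_by
  · calc Classical.choose hs < Classical.choose hs + 1 := by
          rw [Ordinal.add_one_eq_succ]; exact Order.lt_succ _
      _ = α := (Classical.choose_spec hs).symm
  · exact hlt

/-- `F_{ε₀}(x) := F_{ω_{x+1}}(x)`. -/
noncomputable def Feps0 (x : ℕ) : ℕ := fgh (omegaTower (x + 1) 1) x

/-- The inverse `F_{ε₀}^{-1}(x) := max({z ≤ x : F_{ε₀}(z) ≤ x} ∪ {0})`. -/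
noncomputable def Feps0Inv (x : ℕ) : ℕ :=
  sSup ({z : ℕ | z ≤ x ∧ Feps0 z ≤ x} ∪ {0})

/-- The slow function `F^⋄_{ε₀}(x) := F_{ω_{F_{ε₀}^{-1}(x)+1}}(x)`. -/
noncomputable def slowFeps0 (x : ℕ) : ℕ := fgh (omegaTower (Feps0Inv x + 1) 1) x

/-- The slow hierarchy `F^⋄_{ε₀+α}` for `α < ε₀`:
`F^⋄_{ε₀+0} = F^⋄_{ε₀}`, `F^⋄_{ε₀+α+1}(n) = (F^⋄_{ε₀+α})^[n+1](n)`, and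
`F^⋄_{ε₀+λ}(n) = F^⋄_{ε₀+{λ}(n)}(n)` for limits `λ`. -/
noncomputable def slowF (α : Ordinal.{0}) : ℕ → ℕ :=
  if _h0 : α = 0 then slowFeps0
  else if hs : ∃ β, α = β + 1 then fun n => (slowF (Classical.choose hs))^[n + 1] n
  else fun n => if hlt : fundSeq α n < α then slowF (fundSeq α n) n else 0
termination_by α
decreasing_by
  · calc Classical.choose hs < Classical.choose hs + 1 := by
          rw [Ordinal.add_one_eq_succ]; exact Order.lt_succ _
      _ = α := (Classical.choose_spec hs).symm
  · exact hlt

/-- A nonempty finite set of naturals is *large* if its cardinality is at least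
its minimum. -/
def IsLargeSet (Y : Finset ℕ) : Prop := ∃ hY : Y.Nonempty, Y.min' hY ≤ Y.card

/-- The Paris–Harrington statement `PH(k, m, n, N)`: every `k`-colouring of the
`n`-element subsets of `{0, …, N-1}` admits a large homogeneous set with at least
`m` elements. -/
def PH (k m n N : ℕ) : Prop :=
  ∀ f : Finset ℕ → Fin k,
    ∃ Y : Finset ℕ, Y ⊆ Finset.range N ∧ m ≤ Y.card ∧ IsLargeSet Y ∧
      ∀ s t : Finset ℕ, s ⊆ Y → t ⊆ Y → s.card = n → t.card = n → f s = f t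

/-- `σ(n, k)`: the least `N` such that every `k`-colouring of the `n`-element subsets of
`{0, …, N-1}` admits a large homogeneous set with at least `n+1` elements. -/
noncomputable def sigmaPH (n k : ℕ) : ℕ := sInf {N | PH k (n + 1) n N}

/-! ### Closure properties of `ε₀` -/

theorem opow_lt_eps0 {a : Ordinal.{0}} (h : a < eps0) : omega0 ^ a < eps0 :=
  (apply_lt_nfp (isNormal_opow one_lt_omega0)).2 h

theorem lt_opow_of_lt_eps0 {a : Ordinal.{0}} (h : a < eps0) : a < omega0 ^ a := by
  by_contra! hc
  refine absurd h (not_lt.2 ?_)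
  exact nfp_le_fp (isNormal_opow one_lt_omega0).monotone zero_le hc

/-! ### Computing fundamental sequences -/

/-- A last-term form of the Cantor normal form. -/
theorem exists_eq_opow_mul_succ (a : Ordinal.{0}) (ha : a ≠ 0) :
    ∃ γ x : Ordinal.{0}, a = omega0 ^ γ * (x + 1) := by
  induction a using WellFoundedLT.induction with
  | ind a ih =>
    set e := log omega0 a with he
    have hdm := div_add_mod a (omega0 ^ e)
    have hr : a % omega0 ^ e < a := mod_opow_log_lt_self omega0 ha
    by_cases h0 : a % omega0 ^ e = 0
    · have hq : a / omega0 ^ e < omega0 := div_opow_log_lt a one_lt_omega0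
      obtain ⟨k, hk⟩ := lt_omega0.1 hq
      rw [h0, add_zero, hk] at hdm
      cases k with
      | zero => simp at hdm; exact absurd hdm.symm ha
      | succ k => exact ⟨e, k, by rw [← hdm]; push_cast; rfl⟩
    · obtain ⟨γ, x, hx⟩ := ih _ hr h0
      have hle : γ ≤ e := by
        have h1 : omega0 ^ γ ≤ a % omega0 ^ e := by
          rw [hx]; exact le_mul_left _ (by simp)
        have h2 : a % omega0 ^ e < omega0 ^ e := mod_lt _ (opow_ne_zero _ omega0_ne_zero)
        exact ((opow_lt_opow_iff_right one_lt_omega0).1 (h1.trans_lt h2)).le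
      refine ⟨γ, omega0 ^ (e - γ) * (a / omega0 ^ e) + x, ?_⟩
      rw [add_assoc, mul_add, ← mul_assoc, ← opow_add, Ordinal.add_sub_cancel_of_le hle, ← hx, hdm]

theorem fundSeq_zero (n : ℕ) : fundSeq 0 n = 0 := by
  rw [fundSeq]; simp

theorem fundSeq_succ (a : Ordinal.{0}) (n : ℕ) : fundSeq (a + 1) n = a := by
  have hs : ∃ β, a + 1 = β + 1 := ⟨a, rfl⟩
  rw [fundSeq, dif_neg (by simp), dif_pos hs]
  have := Classical.choose_spec hs
  simpa using this.symm

/-- `ω ^ γ * (x + 1)` has no divisor `ω ^ c` with `c > γ`, so the exponent recovered in `fundSeq`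
is `γ`. -/
theorem sSup_dvd_exponents (γ x : Ordinal.{0}) :
    sSup {c : Ordinal.{0} | omega0 ^ c ∣ omega0 ^ γ * (x + 1)} = γ := by
  refine IsGreatest.csSup_eq ⟨dvd_mul_right _ _, ?_⟩
  rintro c ⟨y, hy⟩
  by_contra! hc
  have hp : omega0 ^ γ ≠ (0 : Ordinal.{0}) := opow_ne_zero _ omega0_ne_zero
  rw [← Ordinal.add_sub_cancel_of_le hc.le, opow_add, mul_assoc] at hy
  have hy' := mul_left_cancel₀ hp hy
  have hd : c - γ ≠ 0 := by
    rw [Ne, Ordinal.sub_eq_zero_iff_le]; exact not_le.2 hc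
  have h1 : (omega0 : Ordinal.{0}) ∣ omega0 ^ (c - γ) := by
    conv_lhs => rw [← opow_one omega0]
    exact opow_dvd_opow _ (Order.one_le_iff_ne_zero.2 hd)
  have h2 : (omega0 : Ordinal.{0}) ∣ x + 1 := by
    rw [hy']; exact h1.trans (dvd_mul_right _ _)
  obtain ⟨z, hz⟩ := h2
  have hz0 : z ≠ 0 := by rintro rfl; simp at hz
  have hl : Order.IsSuccLimit (omega0 * z) := isSuccLimit_mul_left isSuccLimit_omega0 (pos_iff_ne_zero.2 hz0)
  rw [← hz] at hl
  exact Order.not_isSuccLimit_add_one x hl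

theorem not_succ_opow_mul {γ : Ordinal.{0}} (x : Ordinal.{0}) (hγ : γ ≠ 0) :
    ¬ ∃ β, omega0 ^ γ * (x + 1) = β + 1 := by
  rintro ⟨β, hβ⟩
  have h : Order.IsSuccLimit (omega0 ^ γ * (x + 1)) :=
    isSuccLimit_mul_left (isSuccLimit_opow_left isSuccLimit_omega0 hγ) (by simp)
  rw [hβ] at h
  exact Order.not_isSuccLimit_add_one β h

theorem opow_mul_pred_div (γ x : Ordinal.{0}) :
    omega0 ^ γ * Ordinal.pred (omega0 ^ γ * (x + 1) / omega0 ^ γ) = omega0 ^ γ * x := by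
  rw [Ordinal.mul_div_cancel _ (opow_ne_zero _ omega0_ne_zero), pred_add_one]

theorem opow_mul_succ_ne_zero (γ x : Ordinal.{0}) : omega0 ^ γ * (x + 1) ≠ 0 :=
  mul_ne_zero (opow_ne_zero _ omega0_ne_zero) (by simp)

theorem fundSeq_opow_succ (δ x : Ordinal.{0}) (n : ℕ) :
    fundSeq (omega0 ^ (δ + 1) * (x + 1)) n =
      omega0 ^ (δ + 1) * x + omega0 ^ δ * ((n : Ordinal) + 1) := by
  rw [fundSeq, dif_neg (opow_mul_succ_ne_zero _ _), dif_neg (not_succ_opow_mul x (by simp))]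
  simp only [sSup_dvd_exponents, opow_mul_pred_div]
  have hs : ∃ β, δ + 1 = β + 1 := ⟨δ, rfl⟩
  rw [dif_pos hs]
  have : Classical.choose hs = δ := by
    have := Classical.choose_spec hs
    simpa using this.symm
  rw [this]

theorem fundSeq_opow_limit {γ : Ordinal.{0}} (x : Ordinal.{0}) (n : ℕ) (h0 : γ ≠ 0)
    (hs : ¬ ∃ δ, γ = δ + 1) (hlt : γ < omega0 ^ γ) :
    fundSeq (omega0 ^ γ * (x + 1)) n = omega0 ^ γ * x + omega0 ^ (fundSeq γ n) := by
  rw [fundSeq, dif_neg (opow_mul_succ_ne_zero _ _), dif_neg (not_succ_opow_mul x h0)]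
  simp only [sSup_dvd_exponents, opow_mul_pred_div]
  have : γ < omega0 ^ γ * (x + 1) := hlt.trans_le (le_mul_left _ (by simp))
  rw [dif_neg hs, dif_pos this]

theorem le_opow_mul_succ (γ x : Ordinal.{0}) : γ ≤ omega0 ^ γ * (x + 1) :=
  (right_le_opow γ one_lt_omega0).trans (le_mul_left _ (by simp))

/-- `ω ^ e * x` splits off as a left summand: the fundamental sequence acts only on the last term
of the Cantor normal form. -/
theorem fundSeq_mul_add {a e : Ordinal.{0}} (x : Ordinal.{0}) (n : ℕ) (h0 : a ≠ 0)
    (ha : a < eps0) (hae : a ≤ omega0 ^ e) :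
    fundSeq (omega0 ^ e * x + a) n = omega0 ^ e * x + fundSeq a n := by
  obtain ⟨γ, y, rfl⟩ := exists_eq_opow_mul_succ a h0
  have hle : γ ≤ e := by
    rw [← opow_le_opow_iff_right one_lt_omega0]
    exact (le_mul_left _ (by simp)).trans hae
  have hγ : γ < eps0 := (le_opow_mul_succ γ y).trans_lt ha
  have hP : omega0 ^ e * x = omega0 ^ γ * (omega0 ^ (e - γ) * x) := by
    rw [← mul_assoc, ← opow_add, Ordinal.add_sub_cancel_of_le hle]
  rw [hP]
  generalize omega0 ^ (e - γ) * x = z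
  rw [← mul_add, ← add_assoc]
  by_cases hγ0 : γ = 0
  · subst hγ0
    simp only [opow_zero, one_mul]
    rw [fundSeq_succ, fundSeq_succ]
  by_cases hs : ∃ δ, γ = δ + 1
  · obtain ⟨δ, rfl⟩ := hs
    rw [fundSeq_opow_succ, fundSeq_opow_succ, mul_add, add_assoc]
  · rw [fundSeq_opow_limit _ _ hγ0 hs (lt_opow_of_lt_eps0 hγ),
      fundSeq_opow_limit _ _ hγ0 hs (lt_opow_of_lt_eps0 hγ), mul_add, add_assoc]

theorem opow_mul_nat_lt (δ : Ordinal.{0}) (n : ℕ) :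
    omega0 ^ δ * ((n : Ordinal) + 1) < omega0 ^ (δ + 1) := by
  rw [opow_add, opow_one]
  refine (mul_lt_mul_iff_right₀ (opow_pos _ omega0_pos)).2 ?_
  exact_mod_cast natCast_lt_omega0 (n + 1)

theorem fundSeq_lt (n : ℕ) (a : Ordinal.{0}) (h0 : a ≠ 0) (ha : a < eps0) :
    fundSeq a n < a := by
  induction a using WellFoundedLT.induction with
  | ind a ih =>
    obtain ⟨γ, y, rfl⟩ := exists_eq_opow_mul_succ a h0
    have hγ : γ < eps0 := (le_opow_mul_succ γ y).trans_lt ha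
    by_cases hγ0 : γ = 0
    · subst hγ0
      simp only [opow_zero, one_mul]
      rw [fundSeq_succ]
      simp
    by_cases hs : ∃ δ, γ = δ + 1
    · obtain ⟨δ, rfl⟩ := hs
      rw [fundSeq_opow_succ, mul_add _ y 1, mul_one]
      exact (add_lt_add_iff_left _).2 (opow_mul_nat_lt δ n)
    · have hlt := lt_opow_of_lt_eps0 hγ
      rw [fundSeq_opow_limit _ _ hγ0 hs hlt, mul_add, mul_one]
      refine (add_lt_add_iff_left _).2 ((opow_lt_opow_iff_right one_lt_omega0).2 ?_)
      exact ih γ (hlt.trans_le (le_mul_left _ (by simp))) hγ0 hγ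

theorem fundSeq_le (n : ℕ) (a : Ordinal.{0}) (ha : a < eps0) : fundSeq a n ≤ a := by
  by_cases h0 : a = 0
  · rw [h0, fundSeq_zero]
  · exact (fundSeq_lt n a h0 ha).le

/-! ### The calculus of the step-down relation -/

theorem stepDown_fundSeq (n : ℕ) (a : Ordinal.{0}) : stepDown n a (fundSeq a n) :=
  Relation.ReflTransGen.single rfl

theorem stepDown_trans {n : ℕ} {a b c : Ordinal.{0}} (h : stepDown n a b) (h' : stepDown n b c) :
    stepDown n a c :=
  Relation.ReflTransGen.trans h h'

theorem stepDown_le {n : ℕ} {a b : Ordinal.{0}} (ha : a < eps0) (h : stepDown n a b) : b ≤ a := by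
  induction h with
  | refl => exact le_rfl
  | tail _ h ih => exact h ▸ (fundSeq_le n _ (ih.trans_lt ha)).trans ih

theorem stepDown_zero (n : ℕ) (a : Ordinal.{0}) (ha : a < eps0) : stepDown n a 0 := by
  induction a using WellFoundedLT.induction with
  | ind a ih =>
    by_cases h0 : a = 0
    · rw [h0]; exact Relation.ReflTransGen.refl
    · have := fundSeq_lt n a h0 ha
      exact stepDown_trans (stepDown_fundSeq n a) (ih _ this (this.trans ha))

theorem stepDown_mul_add {n : ℕ} {a b e : Ordinal.{0}} (x : Ordinal.{0}) (ha : a < eps0)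
    (hae : a ≤ omega0 ^ e) (h : stepDown n a b) :
    stepDown n (omega0 ^ e * x + a) (omega0 ^ e * x + b) := by
  induction h with
  | refl => exact Relation.ReflTransGen.refl
  | @tail b c hab hbc ih =>
    refine stepDown_trans ih ?_
    subst hbc
    by_cases h0 : b = 0
    · rw [h0, fundSeq_zero]; exact Relation.ReflTransGen.refl
    · have hle := stepDown_le ha hab
      rw [← fundSeq_mul_add x n h0 (hle.trans_lt ha) (hle.trans hae)]
      exact stepDown_fundSeq n _

theorem stepDown_opow_mul_nat {n : ℕ} {d : Ordinal.{0}} (hd : d < eps0) {j k : ℕ} (hjk : j ≤ k) :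
    stepDown n (omega0 ^ d * ((k : Ordinal) + 1)) (omega0 ^ d * ((j : Ordinal) + 1)) := by
  induction k, hjk using Nat.le_induction with
  | base => exact Relation.ReflTransGen.refl
  | succ k _ ih =>
    refine stepDown_trans ?_ ih
    have := stepDown_mul_add (n := n) ((k : Ordinal.{0}) + 1) (opow_lt_eps0 hd) le_rfl
      (stepDown_zero n _ (opow_lt_eps0 hd))
    rw [add_zero] at this
    rw [mul_add (omega0 ^ d) _ 1, mul_one]
    exact_mod_cast this

theorem stepDown_opow_succ {n : ℕ} {d : Ordinal.{0}} (hd : d < eps0) {j : ℕ} (hj : j ≤ n) :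
    stepDown n (omega0 ^ (d + 1)) (omega0 ^ d * ((j : Ordinal) + 1)) := by
  have h := stepDown_fundSeq n (omega0 ^ (d + 1) * (0 + 1))
  rw [fundSeq_opow_succ] at h
  simp only [zero_add, mul_one, mul_zero] at h
  exact stepDown_trans h (stepDown_opow_mul_nat hd hj)

theorem stepDown_opow {n : ℕ} {a b : Ordinal.{0}} (ha : a < eps0) (h : stepDown n a b) :
    stepDown n (omega0 ^ a) (omega0 ^ b) := by
  induction h with
  | refl => exact Relation.ReflTransGen.refl
  | @tail b c hab hbc ih =>
    refine stepDown_trans ih ?_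
    subst hbc
    have hb : b < eps0 := (stepDown_le ha hab).trans_lt ha
    by_cases h0 : b = 0
    · rw [h0, fundSeq_zero]; exact Relation.ReflTransGen.refl
    by_cases hs : ∃ δ, b = δ + 1
    · obtain ⟨δ, rfl⟩ := hs
      rw [fundSeq_succ]
      have hδ : δ < eps0 := (le_self_add).trans_lt hb
      simpa using stepDown_opow_succ hδ (Nat.zero_le n)
    · have h := stepDown_fundSeq n (omega0 ^ b * (0 + 1))
      rw [fundSeq_opow_limit _ _ h0 hs (lt_opow_of_lt_eps0 hb)] at h
      simpa using h

/-- A single step with parameter `m` can be simulated by steps with any parameter `n ≥ m`. -/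
theorem stepDown_fundSeq_of_le {m n : ℕ} (hmn : m ≤ n) (a : Ordinal.{0}) (ha : a < eps0) :
    stepDown n a (fundSeq a m) := by
  induction a using WellFoundedLT.induction with
  | ind a ih =>
    by_cases h0 : a = 0
    · rw [h0, fundSeq_zero]; exact Relation.ReflTransGen.refl
    obtain ⟨γ, y, rfl⟩ := exists_eq_opow_mul_succ a h0
    have hγ : γ < eps0 := (le_opow_mul_succ γ y).trans_lt ha
    by_cases hγ0 : γ = 0
    · subst hγ0
      have := stepDown_fundSeq n (y + 1)
      simp only [opow_zero, one_mul]
      rwa [fundSeq_succ] at this ⊢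
    by_cases hs : ∃ δ, γ = δ + 1
    · obtain ⟨δ, rfl⟩ := hs
      have hδ : δ < eps0 := (le_self_add).trans_lt hγ
      rw [fundSeq_opow_succ, mul_add, mul_one]
      exact stepDown_mul_add y (opow_lt_eps0 hγ) le_rfl (stepDown_opow_succ hδ hmn)
    · have hlt := lt_opow_of_lt_eps0 hγ
      rw [fundSeq_opow_limit _ _ hγ0 hs hlt, mul_add, mul_one]
      refine stepDown_mul_add y (opow_lt_eps0 hγ) le_rfl (stepDown_opow hγ ?_)
      exact ih γ (hlt.trans_le (le_mul_left _ (by simp))) hγ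

theorem stepDown_mono {m n : ℕ} (hmn : m ≤ n) {a b : Ordinal.{0}} (ha : a < eps0)
    (h : stepDown m a b) : stepDown n a b := by
  induction h with
  | refl => exact Relation.ReflTransGen.refl
  | @tail b c hab hbc ih =>
    subst hbc
    exact stepDown_trans ih (stepDown_fundSeq_of_le hmn b ((stepDown_le ha hab).trans_lt ha))

/-! ### Towers -/

theorem omegaTower_lt_eps0 (m : ℕ) : omegaTower m 1 < eps0 := by
  induction m with
  | zero =>
    have h0 : (0 : Ordinal.{0}) < eps0 := by
      have h := iterate_le_nfp (fun a : Ordinal.{0} => omega0 ^ a) 0 1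
      simp only [Function.iterate_one, opow_zero] at h
      exact zero_lt_one.trans_le h
    simpa [omegaTower] using opow_lt_eps0 h0
  | succ m ih => exact opow_lt_eps0 ih

theorem stepDown_omegaTower_succ (n m : ℕ) :
    stepDown n (omegaTower (m + 1) 1) (omegaTower m 1) := by
  induction m with
  | zero =>
    have h0 : (0 : Ordinal.{0}) < eps0 := zero_le.trans_lt (omegaTower_lt_eps0 0)
    simpa [omegaTower] using stepDown_opow_succ h0 (Nat.zero_le n)
  | succ m ih => exact stepDown_opow (omegaTower_lt_eps0 _) ih

theorem stepDown_omegaTower_of_le (n : ℕ) {j k : ℕ} (h : j ≤ k) :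
    stepDown n (omegaTower k 1) (omegaTower j 1) := by
  induction k, h using Nat.le_induction with
  | base => exact Relation.ReflTransGen.refl
  | succ k _ ih => exact stepDown_trans (stepDown_omegaTower_succ n k) ih

/-- If `ω_{m+1}` reaches `ω_m + 1`, then `ω_{m+2}` reaches `ω_{m+1} + b` for every `b` that
`ω_{m+1}` reaches. -/
theorem stepDown_omegaTower_add {n m : ℕ} (hn : 0 < n) {b : Ordinal.{0}}
    (h : stepDown n (omegaTower (m + 1) 1) (omegaTower m 1 + 1))
    (hb : stepDown n (omegaTower (m + 1) 1) b) :
    stepDown n (omegaTower (m + 2) 1) (omegaTower (m + 1) 1 + b) := by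
  have h1 : stepDown n (omegaTower (m + 2) 1) (omega0 ^ (omegaTower m 1 + 1)) :=
    stepDown_opow (omegaTower_lt_eps0 _) h
  have h2 := stepDown_opow_succ (n := n) (omegaTower_lt_eps0 m) (j := 1) hn
  have h3 := stepDown_mul_add (e := omegaTower m 1) 1 (omegaTower_lt_eps0 (m + 1)) le_rfl hb
  rw [mul_one] at h3
  rw [Nat.cast_one, mul_add, mul_one] at h2
  exact stepDown_trans h1 (stepDown_trans h2 h3)

theorem stepDown_omegaTower_add_one {n : ℕ} (hn : 0 < n) (m : ℕ) :
    stepDown n (omegaTower (m + 1) 1) (omegaTower m 1 + 1) := by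
  induction m with
  | zero =>
    have h0 : (0 : Ordinal.{0}) < eps0 := zero_le.trans_lt (omegaTower_lt_eps0 0)
    simpa [omegaTower] using stepDown_opow_succ h0 (j := 1) hn
  | succ m ih =>
    exact stepDown_omegaTower_add hn ih (stepDown_omegaTower_of_le n (Nat.zero_le (m + 1)))

/-- If `α < ε₀`, `N > 0` and `ω_N →_N α+1`, then for every `n ≥ N`,
`ω_{n+1} →_n ω_n + α + 1`. -/
theorem stmt12 : ∀ (α : Ordinal.{0}) (N : ℕ), α < eps0 → 0 < N →
    stepDown N (omegaTower N 1) (α + 1) →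
    ∀ n : ℕ, N ≤ n → stepDown n (omegaTower (n + 1) 1) (omegaTower n 1 + α + 1) := by
  intro α N _ hN h n hn
  obtain ⟨m, rfl⟩ : ∃ m, n = m + 1 := ⟨n - 1, by omega⟩
  have h1 : stepDown (m + 1) (omegaTower (m + 1) 1) (α + 1) :=
    stepDown_trans (stepDown_omegaTower_of_le _ hn)
      (stepDown_mono hn (omegaTower_lt_eps0 N) h)
  rw [add_assoc (omegaTower _ _)]
  exact stepDown_omegaTower_add m.succ_pos (stepDown_omegaTower_add_one m.succ_pos m) h1

end
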